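/- Let X : I → ℝ^d be a database indexed by a finite set I, let y ∈ ℝ^d, and let Y : I ∪ {∗} → ℝ^d be the database extending X with the new record Y(∗) = y. Then the set of outlier indices of Y lying in I equals O(X) ∖ CV(X, y, k−1, r), and consequently q_count(Y,k,r) = q_count(X,k,r) − |CV(X,y,k−1,r)| + (1 if deg(Y,r,∗) < k, else 0). (Adding a record turns exactly the degree-(k−1) outliers within distance r of the added record into inliers.) -/

import Mathlib

open Finset
open scoped Classical

noncomputable section

/-- A point of `ℝ^d`. -/
abbrev Pt (d : ℕ) := EuclideanSpace ℝ (Fin d)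

variable {I : Type*} [Fintype I] [DecidableEq I]

/-- The degree of record `i` in a database `X : I → ℝ^d`: the number of other records
within distance `r`. -/
def deg {d : ℕ} (X : I → Pt d) (r : ℝ) (i : I) : ℕ :=
  (univ.filter fun j => j ≠ i ∧ ‖X j - X i‖ ≤ r).card

/-- `O(X)`: the set of outlier indices, that is, records with fewer than `k` neighbors
within radius `r`. -/
def Oset {d : ℕ} (X : I → Pt d) (k : ℕ) (r : ℝ) : Finset I :=
  univ.filter fun i => deg X r i < k

/-- `q_count(X,k,r) = |O(X)|`. -/
def qCount {d : ℕ} (X : I → Pt d) (k : ℕ) (r : ℝ) : ℕ :=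
  (Oset X k r).card

/-- `CV(X,x,m,r)`: the set of degree-`m` record indices within distance `r` of `x`
(empty for `m < 0`). -/
def CV {d : ℕ} (X : I → Pt d) (x : Pt d) (m : ℤ) (r : ℝ) : Finset I :=
  univ.filter fun i => (deg X r i : ℤ) = m ∧ ‖X i - x‖ ≤ r

theorem card_filter_univ_option {α : Type*} [Fintype α] (p : Option α → Prop)
    [DecidablePred p] :
    #{o | p o} = #{a | p (some a)} + if p none then 1 else 0 := by
  simp only [card_filter, Fintype.sum_option, add_comm]

section

variable {d : ℕ} (X : I → Pt d) (Y : Option I → Pt d) (x : Pt d) (k : ℕ) (m : ℤ) (r : ℝ) (i : I)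

theorem mem_Oset : i ∈ Oset X k r ↔ deg X r i < k := by
  simp only [Oset, mem_filter_univ]

theorem mem_CV : i ∈ CV X x m r ↔ (deg X r i : ℤ) = m ∧ ‖X i - x‖ ≤ r := by
  simp only [CV, mem_filter_univ]

variable {k m} in
theorem CV_subset_Oset (hm : m < k) : CV X x m r ⊆ Oset X k r := by
  intro i hi
  obtain ⟨deg_eq, -⟩ := (mem_CV X x m r i).1 hi
  rw [mem_Oset]
  omega

/- A database `Y` on `Option I` is the database `Y ∘ some` on `I` together with the added record
`Y none`. -/
theorem deg_option_some :
    deg Y r (some i) = deg (Y ∘ some) r i + if ‖Y (some i) - Y none‖ ≤ r then 1 else 0 :=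
  calc deg Y r (some i)
      = #{j | some j ≠ some i ∧ ‖Y (some j) - Y (some i)‖ ≤ r}
          + if none ≠ some i ∧ ‖Y none - Y (some i)‖ ≤ r then 1 else 0 :=
        card_filter_univ_option fun o ↦ o ≠ some i ∧ ‖Y o - Y (some i)‖ ≤ r
    _ = deg (Y ∘ some) r i + if ‖Y (some i) - Y none‖ ≤ r then 1 else 0 := by
        simp [deg, norm_sub_rev (Y none)]

theorem some_mem_Oset :
    some i ∈ Oset Y k r ↔ i ∈ Oset (Y ∘ some) k r \ CV (Y ∘ some) (Y none) ((k : ℤ) - 1) r := by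
  rw [mem_sdiff, mem_Oset, mem_Oset, mem_CV, deg_option_some, Function.comp_apply]
  split_ifs with near
  · simp only [near, and_true]
    omega
  · simp only [near, and_false, not_false_eq_true, and_true, add_zero]

theorem qCount_option :
    qCount Y k r = #{i | some i ∈ Oset Y k r} + if deg Y r none < k then 1 else 0 := by
  simp only [mem_Oset]
  exact card_filter_univ_option fun o ↦ deg Y r o < k

end

/-- Adding a record at `y` turns exactly the degree-`(k−1)` outliers within distance `r`
of the added record into inliers: the outlier indices of the extended database `Y` lying
in `I` are `O(X) ∖ CV(X,y,k−1,r)`, and consequently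
`q_count(Y,k,r) = q_count(X,k,r) − |CV(X,y,k−1,r)| + (1 if the new record is an outlier)`.
Here `Y : Option I → ℝ^d` extends `X` with the new record `Y none = y`. -/
theorem outliers_after_addition
    (d k : ℕ) (hd : 1 ≤ d) (hk : 1 ≤ k) (r : ℝ) (hr : 0 < r)
    (I : Type*) [Fintype I] [DecidableEq I] (X : I → Pt d) (y : Pt d) :
    ((univ.filter fun i : I => some i ∈ Oset (fun o : Option I => o.elim y X) k r)
        = Oset X k r \ CV X y ((k : ℤ) - 1) r) ∧
    ((qCount (fun o : Option I => o.elim y X) k r : ℤ)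
        = (qCount X k r : ℤ) - (CV X y ((k : ℤ) - 1) r).card
          + (if deg (fun o : Option I => o.elim y X) r none < k then 1 else 0)) := by
  let Y : Option I → Pt d := fun o ↦ o.elim y X
  have outliers_eq :
      (univ.filter fun i : I => some i ∈ Oset Y k r)
        = Oset X k r \ CV X y ((k : ℤ) - 1) r := by
    ext i
    rw [mem_filter_univ]
    exact some_mem_Oset Y k r i
  have CV_subset : CV X y ((k : ℤ) - 1) r ⊆ Oset X k r := CV_subset_Oset X y r (sub_one_lt _)
  refine ⟨outliers_eq, ?_⟩
  calc (qCount Y k r : ℤ)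
      = #(Oset X k r \ CV X y ((k : ℤ) - 1) r) + (if deg Y r none < k then 1 else 0) := by
        rw [qCount_option, outliers_eq, Nat.cast_add, Nat.cast_ite, Nat.cast_one, Nat.cast_zero]
    _ = qCount X k r - #(CV X y ((k : ℤ) - 1) r) + (if deg Y r none < k then 1 else 0) := by
        rw [cast_card_sdiff CV_subset, qCount]
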